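/- There exist constants C > 0 and w₀ ∈ (0,1) such that for every w with 0 < w < w₀ and every real Y ≥ 1, |∑_{n ≤ Y} (r₂(n)²/n²)·sin²(π·√n·w) − 8·π²·w²·(log w)²| ≤ C·(w²·|log w| + Y^{−1}·log 2Y). -/

import Mathlib

open MeasureTheory Filter Real

noncomputable section

/-- The Cygan–Korányi norm on `ℝ³`. -/
def cyganNorm (u : ℝ × ℝ × ℝ) : ℝ :=
  ((u.1 ^ 2 + u.2.1 ^ 2) ^ 2 + u.2.2 ^ 2) ^ ((1 : ℝ) / 4)

/-- The unit ball for the Cygan–Korányi norm. -/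
def cyganBall : Set (ℝ × ℝ × ℝ) := {u | cyganNorm u ≤ 1}

/-- The Heisenberg dilation `δ_x`. -/
def heisDil (x : ℝ) (u : ℝ × ℝ × ℝ) : ℝ × ℝ × ℝ := (x * u.1, x * u.2.1, x ^ 2 * u.2.2)

/-- Euclidean volume of the Cygan–Korányi unit ball. -/
def volB : ℝ := (volume cyganBall).toReal

/-- `N(x)`: the number of integer lattice points inside `δ_x B`. -/
def latticeCount (x : ℝ) : ℕ :=
  Set.ncard {p : ℤ × ℤ × ℤ | ((p.1 : ℝ), (p.2.1 : ℝ), (p.2.2 : ℝ)) ∈ heisDil x '' cyganBall}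

/-- The error term `E(x;ω)` for the shell count. -/
def Eshell (ω : ℝ → ℝ) (x : ℝ) : ℝ :=
  ((latticeCount (x + ω x) : ℝ) - (latticeCount x : ℝ))
    - volB * ∑ j ∈ Finset.Icc 1 4, (Nat.choose 4 j : ℝ) * x ^ (4 - j) * ω x ^ j

/-- The normalized error term `Ê(x;ω) = E(x;ω)/x²`. -/
def Ehat (ω : ℝ → ℝ) (x : ℝ) : ℝ := Eshell ω x / x ^ 2

/-- `σ(X;ω)`, the square root of the variance of `Ê(x;ω)` over `[X,2X]`. -/
def sigmaShell (ω : ℝ → ℝ) (X : ℝ) : ℝ :=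
  Real.sqrt ((1 / X) * ∫ x in X..(2 * X), Ehat ω x ^ 2)

/-- `M_j(X;ω) = (1/X)·∫_X^{2X} (ω(x)·log ω(x))^j dx`. -/
def Mom (j : ℕ) (X : ℝ) (ω : ℝ → ℝ) : ℝ :=
  (1 / X) * ∫ x in X..(2 * X), (ω x * Real.log (ω x)) ^ j

/-- `L_j(ω) = lim_{X→∞} M_j(X;ω)/M_2(X;ω)^{j/2}`. -/
def Llim (ω : ℝ → ℝ) (j : ℕ) : ℝ :=
  limUnder atTop fun X => Mom j X ω / Mom 2 X ω ^ (j / 2)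

/-- The Gaussian moment factor `j!/(2^{j/2}·(j/2)!)`. -/
def gaussMoment (j : ℕ) : ℝ :=
  (Nat.factorial j : ℝ) / (2 ^ (j / 2) * (Nat.factorial (j / 2) : ℝ))

/-- The regularity class `Ω` of gap width functions. -/
structure OmegaClass (ω : ℝ → ℝ) : Prop where
  contDiff : ContDiffOn ℝ 2 ω (Set.Ioi 0)
  pos : ∀ x, 0 < x → 0 < ω x
  tendsto_zero : Tendsto ω atTop (nhds 0)
  deriv_small : ∀ᶠ x in atTop, |deriv ω x| < 1 / 2
  zeros_bound : ∃ C > (0 : ℝ), ∃ ξ > (0 : ℝ), ∀ᶠ X in atTop,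
    {x ∈ Set.Icc X (2 * X) | deriv ω x = 0}.Finite ∧
    {x ∈ Set.Icc X (2 * X) | deriv (deriv ω) x = 0}.Finite ∧
    ({x ∈ Set.Icc X (2 * X) | deriv ω x = 0}.ncard : ℝ) *
        sSup (ω '' Set.Icc X (2 * X)) ≤ C * X ^ ((1 : ℝ) / 2) ∧
    ({x ∈ Set.Icc X (2 * X) | deriv (deriv ω) x = 0}.ncard : ℝ) ≤ C * X ^ (1 - ξ)
  mom2_lower : ∀ α > (0 : ℝ), ∃ c > (0 : ℝ), ∀ᶠ X in atTop, c * X ^ (-α) ≤ Mom 2 X ω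
  Llim_exists : ∀ j : ℕ, Even j →
    Tendsto (fun X => Mom j X ω / Mom 2 X ω ^ (j / 2)) atTop (nhds (Llim ω j))
  carleman : Tendsto (fun n => ∑ k ∈ Finset.range n,
      (gaussMoment (2 * (k + 1)) * Llim ω (2 * (k + 1))) ^
        ((-1 : ℝ) / (2 * ((k : ℝ) + 1)))) atTop atTop

/-- `r₂(m)`: the number of representations of `m` as a sum of two integer squares. -/
def r2 (m : ℕ) : ℕ := Set.ncard {p : ℤ × ℤ | p.1 ^ 2 + p.2 ^ 2 = (m : ℤ)}

/-- The sawtooth function `ψ(t) = t − ⌊t⌋ − 1/2`. -/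
def sawtooth (t : ℝ) : ℝ := t - ⌊t⌋ - 1 / 2

/-- The sawtooth sum `Ξ_ψ(x;ω)`. -/
def XiPsi (ω : ℝ → ℝ) (x : ℝ) : ℝ :=
  (∑ m ∈ Finset.Icc 1 ⌊(x + ω x) ^ 2⌋₊,
      (r2 m : ℝ) * sawtooth (Real.sqrt ((x + ω x) ^ 4 - (m : ℝ) ^ 2)))
    - ∑ m ∈ Finset.Icc 1 ⌊x ^ 2⌋₊, (r2 m : ℝ) * sawtooth (Real.sqrt (x ^ 4 - (m : ℝ) ^ 2))

namespace DiagEval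

/-- The norm of a Gaussian integer as a natural number. -/
def nm (z : GaussianInt) : ℕ := (Zsqrtd.norm z).natAbs

lemma nm_cast (z : GaussianInt) : ((nm z : ℕ) : ℤ) = z.re ^ 2 + z.im ^ 2 := by
  unfold nm
  have h : Zsqrtd.norm z = z.re ^ 2 + z.im ^ 2 := by
    rw [Zsqrtd.norm_def]; ring
  rw [h, Int.natAbs_of_nonneg (by positivity)]

lemma nm_mul (z w : GaussianInt) : nm (z * w) = nm z * nm w := by
  unfold nm
  rw [Zsqrtd.norm_mul, Int.natAbs_mul]

lemma nm_star (z : GaussianInt) : nm (star z) = nm z := by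
  unfold nm
  rw [Zsqrtd.norm_conj]

lemma mul_star_eq (z : GaussianInt) : z * star z = ((nm z : ℕ) : GaussianInt) := by
  have := Zsqrtd.norm_eq_mul_conj z
  rw [← this]
  have h2 : Zsqrtd.norm z = ((nm z : ℕ) : ℤ) := by
    rw [nm_cast, Zsqrtd.norm_def]; ring
  rw [h2]; push_cast; rfl

lemma nm_eq_zero {z : GaussianInt} : nm z = 0 ↔ z = 0 := by
  constructor
  · intro h
    have := nm_cast z
    rw [h] at this
    push_cast at this
    have h1 : z.re = 0 := pow_eq_zero_iff (two_ne_zero) |>.1 (by nlinarith [sq_nonneg z.re, sq_nonneg z.im] : z.re ^ 2 = 0)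
    have h2 : z.im = 0 := pow_eq_zero_iff (two_ne_zero) |>.1 (by nlinarith [sq_nonneg z.re, sq_nonneg z.im] : z.im ^ 2 = 0)
    exact Zsqrtd.ext h1 h2
  · rintro rfl; rfl

/-- Nonzero Gaussian integers of norm at most `N`. -/
def Zs (N : ℕ) : Finset GaussianInt :=
  ((Finset.Icc (-(N : ℤ)) N ×ˢ Finset.Icc (-(N : ℤ)) N).image
    (fun p => (⟨p.1, p.2⟩ : GaussianInt))).filter (fun z => 0 < nm z ∧ nm z ≤ N)

lemma mem_Zs {N : ℕ} {z : GaussianInt} : z ∈ Zs N ↔ 0 < nm z ∧ nm z ≤ N := by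
  unfold Zs
  rw [Finset.mem_filter]
  refine ⟨fun h => h.2, fun h => ⟨?_, h⟩⟩
  have hc := nm_cast z
  have hN : (nm z : ℤ) ≤ N := by exact_mod_cast h.2
  rw [Finset.mem_image]
  refine ⟨(z.re, z.im), ?_, rfl⟩
  simp only [Finset.mem_product, Finset.mem_Icc]
  refine ⟨⟨?_, ?_⟩, ?_, ?_⟩ <;> nlinarith [sq_nonneg z.re, sq_nonneg z.im, sq_nonneg (z.re-1), sq_nonneg (z.re+1), sq_nonneg (z.im-1), sq_nonneg (z.im+1), Int.le_self_sq z.re, Int.le_self_sq z.im, Int.le_self_sq (-z.re), Int.le_self_sq (-z.im)]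

/-- Primitive Gaussian integers (coprime to their conjugate) of norm at most `N`. -/
def Ps (N : ℕ) : Finset GaussianInt :=
  open Classical in (Zs N).filter (fun u => IsCoprime u (star u))

lemma mem_Ps {N : ℕ} {z : GaussianInt} : z ∈ Ps N ↔ (0 < nm z ∧ nm z ≤ N) ∧ IsCoprime z (star z) := by
  unfold Ps
  classical
  rw [Finset.mem_filter, mem_Zs]

lemma r2_eq (n N : ℕ) (hn : 0 < n) (hN : n ≤ N) : r2 n = ((Zs N).filter (fun z => nm z = n)).card := by
  unfold r2
  have : {p : ℤ × ℤ | p.1 ^ 2 + p.2 ^ 2 = (n : ℤ)} =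
      (((Zs N).filter (fun z => nm z = n)).image (fun z : GaussianInt => (z.re, z.im)) : Finset (ℤ × ℤ)) := by
    ext p
    simp only [Set.mem_ofPred_eq, Finset.coe_image, Set.mem_image, Finset.mem_coe, Finset.mem_filter, mem_Zs]
    constructor
    · intro h
      have h2 : nm ⟨p.1, p.2⟩ = n := by
        have := nm_cast ⟨p.1, p.2⟩
        simp only at this
        rw [h] at this
        exact_mod_cast this
      exact ⟨⟨p.1, p.2⟩, ⟨by omega, h2⟩, rfl⟩
    · rintro ⟨z, ⟨_, h⟩, rfl⟩
      simp only
      rw [← nm_cast, h]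
  rw [this, Set.ncard_coe_finset, Finset.card_image_of_injOn]
  intro a _ b _ h
  simp only [Prod.mk.injEq] at h
  exact Zsqrtd.ext h.1 h.2

lemma exists_decomp (z w : GaussianInt) (hz : z ≠ 0) (h : nm z = nm w) :
    ∃ g u e : GaussianInt, z = g * u ∧ w = g * e * star u ∧ nm e = 1 ∧ IsCoprime u (star u) := by
  set g := EuclideanDomain.gcd z w with hg
  have hg0 : g ≠ 0 := by
    intro h0
    rw [hg, EuclideanDomain.gcd_eq_zero_iff] at h0
    exact hz h0.1
  obtain ⟨u, hu⟩ := EuclideanDomain.gcd_dvd_left z w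
  obtain ⟨v, hv⟩ := EuclideanDomain.gcd_dvd_right z w
  rw [← hg] at hu hv
  have hcop : IsCoprime u v := by
    have hb := EuclideanDomain.gcd_eq_gcd_ab z w
    rw [← hg] at hb
    refine ⟨EuclideanDomain.gcdA z w, EuclideanDomain.gcdB z w, ?_⟩
    apply mul_left_cancel₀ hg0
    calc _ = (g * u) * EuclideanDomain.gcdA z w + (g * v) * EuclideanDomain.gcdB z w := by ring
      _ = g := by rw [← hu, ← hv, ← hb]
      _ = _ := by ring
  have hgn : 0 < nm g := Nat.pos_of_ne_zero (fun h => hg0 (nm_eq_zero.1 h))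
  have huv : nm u = nm v := by
    rw [hu, hv, nm_mul, nm_mul] at h
    exact Nat.eq_of_mul_eq_mul_left hgn h
  have hu0 : u ≠ 0 := by rintro rfl; simp at hu; exact hz hu
  have hun : 0 < nm u := Nat.pos_of_ne_zero (fun h => hu0 (nm_eq_zero.1 h))
  have hmul : u * star u = v * star v := by rw [mul_star_eq, mul_star_eq, huv]
  have hd : u ∣ star v := hcop.dvd_of_dvd_mul_left ⟨star u, hmul.symm⟩
  obtain ⟨t, ht⟩ := hd
  have hv2 : v = star t * star u := by
    have := congrArg star ht
    rw [star_star, star_mul] at this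
    exact this
  have ht1 : nm t = 1 := by
    have := congrArg nm ht
    rw [nm_star, nm_mul, ← huv] at this
    nlinarith
  refine ⟨g, u, star t, hu, ?_, by rw [nm_star, ht1], ?_⟩
  · rw [hv, hv2]; ring
  · rw [hv2] at hcop
    exact hcop.of_mul_right_right

lemma unit_star {e : GaussianInt} (h : nm e = 1) : e * star e = 1 := by
  rw [mul_star_eq, h]; simp

lemma coprime_dvd {u g g0 : GaussianInt} (h : IsCoprime u (star u)) (h1 : g0 ∣ g * u) (h2 : g0 ∣ g * star u) :
    g0 ∣ g := by
  obtain ⟨a, b, hab⟩ := h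
  have : g = (g * u) * a + (g * star u) * b := by
    calc g = g * (a * u + b * star u) := by rw [hab, mul_one]
      _ = _ := by ring
  rw [this]
  exact dvd_add (h1.mul_right _) (h2.mul_right _)

/-- Fibre count: the fibre of `(u, g, e) ↦ (g u, g e ū)`. -/
lemma fiber_card (N : ℕ) (z w : GaussianInt) (hz : z ∈ Zs N) (h : nm z = nm w) :
    (((Ps N).sigma (fun u => Zs (N / nm u) ×ˢ Zs 1)).filter
      (fun y => (y.2.1 * y.1, y.2.1 * y.2.2 * star y.1) = (z, w))).card = (Zs 1).card := by
  rw [mem_Zs] at hz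
  have hz0 : z ≠ 0 := by rintro rfl; simp [nm] at hz
  obtain ⟨g0, u0, e0, hz1, hw1, he0, hc0⟩ := exists_decomp z w hz0 h
  have hnz : nm z = nm g0 * nm u0 := by rw [hz1, nm_mul]
  have hg0p : 0 < nm g0 := Nat.pos_of_ne_zero (fun h => by rw [h] at hnz; omega)
  have hu0p : 0 < nm u0 := Nat.pos_of_ne_zero (fun h => by rw [h] at hnz; omega)
  have hg00 : g0 ≠ 0 := fun h => by rw [nm_eq_zero.2 h] at hg0p; omega
  have hu00 : u0 ≠ 0 := fun h => by rw [nm_eq_zero.2 h] at hu0p; omega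
  symm
  refine Finset.card_bij (fun d _ => (⟨u0 * star d, (g0 * d, e0 * star d * star d)⟩ : Σ _ : GaussianInt, GaussianInt × GaussianInt)) ?_ ?_ ?_
  · intro d hd
    rw [mem_Zs] at hd
    have hd1 : nm d = 1 := by omega
    have hdd := unit_star hd1
    simp only [Finset.mem_filter, Finset.mem_sigma, Finset.mem_product, mem_Ps, mem_Zs, nm_mul, nm_star, hd1, he0, star_mul, star_star, Prod.mk.injEq, mul_one]
    refine ⟨⟨⟨⟨hu0p, ?_⟩, ?_⟩, ⟨hg0p, ?_⟩, by simp⟩, ?_, ?_⟩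
    · nlinarith
    · have hdu : IsUnit d := IsUnit.of_mul_eq_one _ hdd
      have hdu' : IsUnit (star d) := IsUnit.of_mul_eq_one d (by rw [mul_comm]; exact hdd)
      rw [mul_comm d]
      exact (isCoprime_mul_unit_right_left hdu' _ _).2 ((isCoprime_mul_unit_right_right hdu _ _).2 hc0)
    · rw [Nat.le_div_iff_mul_le hu0p]; omega
    · rw [hz1]
      calc g0 * d * (u0 * star d) = g0 * u0 * (d * star d) := by ring
        _ = _ := by rw [hdd, mul_one]
    · rw [hw1]
      calc g0 * d * (e0 * star d * star d) * (d * star u0) = g0 * e0 * star u0 * (d * star d) * (d * star d) := by ring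
        _ = _ := by rw [hdd, mul_one, mul_one]
  · intro d _ d' _ hh
    simp only [Sigma.mk.injEq, heq_eq_eq, Prod.mk.injEq] at hh
    exact mul_left_cancel₀ hg00 hh.2.1
  · rintro ⟨u, g, e⟩ hy
    simp only [Finset.mem_filter, Finset.mem_sigma, Finset.mem_product, mem_Ps, mem_Zs, Prod.mk.injEq] at hy
    obtain ⟨⟨⟨⟨hup, hun⟩, huc⟩, ⟨hgp, hgn⟩, hep, hen⟩, hy1, hy2⟩ := hy
    have he1 : nm e = 1 := by omega
    have hee := unit_star he1
    have hee0 := unit_star he0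
    have hA : g0 ∣ g := by
      apply coprime_dvd huc
      · rw [hy1, hz1]; exact dvd_mul_right _ _
      · have : g * star u = g0 * (e0 * star u0 * star e) := by
          calc g * star u = g * star u * (e * star e) := by rw [hee, mul_one]
            _ = (g * e * star u) * star e := by ring
            _ = _ := by rw [hy2, hw1]; ring
        rw [this]; exact dvd_mul_right _ _
    obtain ⟨d, hd⟩ := hA
    have hB : g ∣ g0 := by
      apply coprime_dvd hc0
      · rw [← hz1, ← hy1]; exact dvd_mul_right _ _
      · have : g0 * star u0 = g * (e * star u * star e0) := by
          calc g0 * star u0 = g0 * star u0 * (e0 * star e0) := by rw [hee0, mul_one]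
            _ = (g0 * e0 * star u0) * star e0 := by ring
            _ = _ := by rw [← hw1, ← hy2]; ring
        rw [this]; exact dvd_mul_right _ _
    obtain ⟨d', hd'⟩ := hB
    have hdd' : d * d' = 1 := by
      apply mul_left_cancel₀ hg00
      rw [mul_one, ← mul_assoc, ← hd, ← hd']
    have hd1 : nm d = 1 := by
      have := congrArg nm hdd'
      rw [nm_mul] at this
      exact Nat.eq_one_of_mul_eq_one_right this
    have hdd := unit_star hd1
    have hdu : d * u = u0 := by
      apply mul_left_cancel₀ hg00
      rw [← mul_assoc, ← hd, hy1, hz1]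
    have hu : u = u0 * star d := by
      rw [← hdu]
      calc u = u * (d * star d) := by rw [hdd, mul_one]
        _ = _ := by ring
    have he : e = e0 * star d * star d := by
      have hs : star u0 ≠ 0 := by simpa using hu00
      apply mul_left_cancel₀ (mul_ne_zero hg00 hs)
      have h3 : g0 * d * e * (star u0 * d) = g0 * e0 * star u0 := by
        rw [← hw1, ← hy2, hd, hu, star_mul, star_star]; ring
      calc g0 * star u0 * e = (g0 * d * e * (star u0 * d)) * (star d * star d) := by
            calc g0 * star u0 * e = g0 * star u0 * e * (d * star d) * (d * star d) := by rw [hdd, mul_one, mul_one]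
              _ = _ := by ring
        _ = _ := by rw [h3]; ring
    refine ⟨d, by rw [mem_Zs]; omega, ?_⟩
    rw [← hu, ← he, ← hd]

/-- Convolution identity behind the second moment. -/
lemma conv_identity (N : ℕ) (F : ℕ → ℝ) :
    ∑ n ∈ Finset.Ioc 0 N, (r2 n : ℝ) ^ 2 * F n =
      ∑ u ∈ Ps N, ∑ g ∈ Zs (N / nm u), F (nm u * nm g) := by
  have hcard : (0 : ℝ) < (Zs 1).card := by
    have : (1 : GaussianInt) ∈ Zs 1 := by rw [mem_Zs]; simp [nm]
    exact_mod_cast Finset.card_pos.2 ⟨1, this⟩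
  apply mul_left_cancel₀ hcard.ne'
  have hL : ∑ n ∈ Finset.Ioc 0 N, (r2 n : ℝ) ^ 2 * F n =
      ∑ p ∈ (Zs N ×ˢ Zs N).filter (fun p => nm p.1 = nm p.2), F (nm p.1) := by
    rw [← Finset.sum_fiberwise_of_maps_to (g := fun p : GaussianInt × GaussianInt => nm p.1) (t := Finset.Ioc 0 N)]
    · apply Finset.sum_congr rfl
      intro n hn
      rw [Finset.mem_Ioc] at hn
      have : ((Zs N ×ˢ Zs N).filter (fun p => nm p.1 = nm p.2)).filter (fun p => nm p.1 = n) =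
        ((Zs N).filter (fun z => nm z = n)) ×ˢ ((Zs N).filter (fun z => nm z = n)) := by
        ext ⟨a, b⟩
        simp only [Finset.mem_filter, Finset.mem_product]
        constructor
        · rintro ⟨⟨⟨h1, h2⟩, h3⟩, h4⟩; exact ⟨⟨h1, h4⟩, h2, by omega⟩
        · rintro ⟨⟨h1, h2⟩, h3, h4⟩; exact ⟨⟨⟨h1, h3⟩, by omega⟩, h2⟩
      rw [this, r2_eq n N hn.1 hn.2]
      rw [Finset.sum_congr rfl (g := fun _ => F n)]
      · rw [Finset.sum_const, Finset.card_product, nsmul_eq_mul]; push_cast; ring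
      · intro x hx
        simp only [Finset.mem_filter, Finset.mem_product] at hx
        rw [hx.1.2]
    · intro p hp
      simp only [Finset.mem_filter, Finset.mem_product, mem_Zs] at hp
      simp only [Finset.mem_Ioc]; exact hp.1.1
  have hR : (Zs 1).card * ∑ u ∈ Ps N, ∑ g ∈ Zs (N / nm u), F (nm u * nm g) =
      ∑ y ∈ (Ps N).sigma (fun u => Zs (N / nm u) ×ˢ Zs 1), F (nm (y.2.1 * y.1)) := by
    rw [Finset.sum_sigma, Finset.mul_sum]
    apply Finset.sum_congr rfl
    intro u _
    rw [Finset.sum_product, Finset.mul_sum]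
    apply Finset.sum_congr rfl
    intro g _
    simp only [Finset.sum_const, nsmul_eq_mul]
    rw [nm_mul, mul_comm (nm g)]
  rw [hL, hR]
  rw [← Finset.sum_fiberwise_of_maps_to (s := (Ps N).sigma (fun u => Zs (N / nm u) ×ˢ Zs 1)) (g := fun y => (y.2.1 * y.1, y.2.1 * y.2.2 * star y.1)) (t := (Zs N ×ˢ Zs N).filter (fun p => nm p.1 = nm p.2))]
  · rw [Finset.mul_sum]
    apply Finset.sum_congr rfl
    rintro ⟨z, w⟩ hp
    simp only [Finset.mem_filter, Finset.mem_product] at hp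
    rw [← fiber_card N z w hp.1.1 hp.2]
    rw [← nsmul_eq_mul, ← Finset.sum_const]
    apply Finset.sum_congr rfl
    intro y hy
    simp only [Finset.mem_filter, Prod.mk.injEq] at hy
    rw [hy.2.1]
  · rintro ⟨u, g, e⟩ hy
    simp only [Finset.mem_sigma, Finset.mem_product, mem_Ps, mem_Zs] at hy
    obtain ⟨⟨⟨hup, hun⟩, huc⟩, ⟨hgp, hgn⟩, hep, hen⟩ := hy
    have he1 : nm e = 1 := by omega
    rw [Nat.le_div_iff_mul_le hup] at hgn
    simp only [Finset.mem_filter, Finset.mem_product, mem_Zs, nm_mul, nm_star, he1, mul_one]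
    have := Nat.mul_pos hgp hup
    exact ⟨⟨⟨this, hgn⟩, this, hgn⟩, trivial⟩

end DiagEval

namespace DiagEval

lemma coprime_iff (u : GaussianInt) :
    IsCoprime u (star u) ↔ Int.gcd u.re u.im = 1 ∧ Odd (nm u) := by
  have hnm := nm_cast u
  constructor
  · rintro ⟨a, b, hab⟩
    have hre := congrArg Zsqrtd.re hab
    have him := congrArg Zsqrtd.im hab
    simp only [Zsqrtd.re_add, Zsqrtd.re_mul, Zsqrtd.im_add, Zsqrtd.im_mul, Zsqrtd.re_star, Zsqrtd.im_star, Zsqrtd.re_one, Zsqrtd.im_one] at hre him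
    constructor
    · rw [← Int.isCoprime_iff_gcd_eq_one]
      exact ⟨a.re + b.re, b.im - a.im, by linarith⟩
    · rw [← Nat.not_even_iff_odd]
      intro he
      have he' : Even (u.re ^ 2 + u.im ^ 2) := by rw [← hnm]; exact_mod_cast he
      have : Even (u.re + u.im) := by
        rw [Int.even_add] at he' ⊢
        simpa [Int.even_pow] using he'
      obtain ⟨k, hk⟩ := this
      have h1 : u.im = 2 * k - u.re := by linarith
      rw [h1] at hre him
      have : 2 * (a.im * u.re + k * a.re + b.im * u.re - k * b.re - a.im * k + b.im * k + b.re * u.re - b.im * u.re) = 1 := by linarith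
      omega
  · rintro ⟨hg, ho⟩
    have hg' : IsCoprime u.re u.im := Int.isCoprime_iff_gcd_eq_one.2 hg
    obtain ⟨x, y, hxy⟩ := hg'
    obtain ⟨k, hk⟩ := ho
    -- 2 = x (u + ū) + y * (-i) (u - ū)
    have h2 : (2 : GaussianInt) = ((⟨x, -y⟩ : GaussianInt)) * u + (⟨x, y⟩ : GaussianInt) * star u := by
      ext
      · simp; linarith
      · simp; ring
    have h3 : (1 : GaussianInt) = u * star u - 2 * (k : GaussianInt) := by
      rw [mul_star_eq, hk]; push_cast; ring
    refine ⟨star u - k * ⟨x, -y⟩, - k * ⟨x, y⟩, ?_⟩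
    rw [h3, h2]; ring

/-- `∑ 1/|z|²` over nonzero Gaussian integers. -/
def A (N : ℕ) : ℝ := ∑ z ∈ Zs N, 1 / (nm z : ℝ)
/-- `∑ 1/|u|²` over primitive Gaussian integers. -/
def P (N : ℕ) : ℝ := ∑ z ∈ Ps N, 1 / (nm z : ℝ)
/-- `∑ 1/|z|²` over Gaussian integers of odd norm. -/
def Q (N : ℕ) : ℝ := ∑ z ∈ (Zs N).filter (fun z => Odd (nm z)), 1 / (nm z : ℝ)

lemma even_iff (z : GaussianInt) (h : ¬ Odd (nm z)) : ∃ t : GaussianInt, z = ⟨1, 1⟩ * t := by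
  rw [Nat.not_odd_iff_even] at h
  have hnm := nm_cast z
  have he' : Even (z.re ^ 2 + z.im ^ 2) := by rw [← hnm]; exact_mod_cast h
  have : Even (z.re + z.im) := by
    rw [Int.even_add] at he' ⊢
    simpa [Int.even_pow] using he'
  obtain ⟨k, hk⟩ := this
  refine ⟨⟨k, z.im - k⟩, ?_⟩
  ext
  · simp; linarith
  · simp

lemma Q_eq_A (N : ℕ) : Q N = A N - 1 / 2 * A (N / 2) := by
  have h1 : A N = Q N + ∑ z ∈ (Zs N).filter (fun z => ¬ Odd (nm z)), 1 / (nm z : ℝ) := by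
    unfold A Q
    rw [Finset.sum_filter_add_sum_filter_not]
  have hn2 : nm ⟨1, 1⟩ = 2 := by rfl
  have h2 : 1 / 2 * A (N / 2) = ∑ z ∈ (Zs N).filter (fun z => ¬ Odd (nm z)), 1 / (nm z : ℝ) := by
    unfold A
    rw [Finset.mul_sum]
    refine Finset.sum_bij (fun t _ => (⟨1, 1⟩ : GaussianInt) * t) ?_ ?_ ?_ ?_
    · intro t ht
      rw [mem_Zs] at ht
      rw [Finset.mem_filter, mem_Zs, nm_mul, hn2, Nat.not_odd_iff_even]
      exact ⟨by omega, even_two_mul _⟩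
    · intro a _ b _ h
      exact mul_left_cancel₀ (by intro h; have := congrArg Zsqrtd.re h; simp at this) h
    · intro z hz
      rw [Finset.mem_filter, mem_Zs] at hz
      obtain ⟨t, ht⟩ := even_iff z hz.2
      refine ⟨t, ?_, ht.symm⟩
      rw [ht, nm_mul, hn2] at hz
      rw [mem_Zs]; omega
    · intro t _
      rw [nm_mul, hn2]; push_cast; ring
  linarith

lemma nm_natCast_mul (d : ℕ) (u : GaussianInt) : nm ((d : GaussianInt) * u) = d ^ 2 * nm u := by
  rw [nm_mul]
  congr 1
  have := nm_cast (d : GaussianInt)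
  simp at this
  exact_mod_cast this

lemma Q_eq_P (N : ℕ) : Q N = ∑ d ∈ (Finset.Ioc 0 N).filter Odd, 1 / (d : ℝ) ^ 2 * P (N / d ^ 2) := by
  unfold Q
  have hdv : ∀ z : GaussianInt, ((Int.gcd z.re z.im) ^ 2 : ℕ) ∣ nm z := by
    intro z
    have h1 : ((Int.gcd z.re z.im : ℕ) : ℤ) ∣ z.re := Int.gcd_dvd_left _ _
    have h2 : ((Int.gcd z.re z.im : ℕ) : ℤ) ∣ z.im := Int.gcd_dvd_right _ _
    have : (((Int.gcd z.re z.im) ^ 2 : ℕ) : ℤ) ∣ ((nm z : ℕ) : ℤ) := by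
      rw [nm_cast]; push_cast
      exact dvd_add (pow_dvd_pow_of_dvd h1 2) (pow_dvd_pow_of_dvd h2 2)
    exact_mod_cast this
  rw [← Finset.sum_fiberwise_of_maps_to (g := fun z : GaussianInt => Int.gcd z.re z.im) (t := (Finset.Ioc 0 N).filter Odd)]
  · apply Finset.sum_congr rfl
    intro d hd
    rw [Finset.mem_filter, Finset.mem_Ioc] at hd
    obtain ⟨⟨hd0, hdN⟩, hdo⟩ := hd
    unfold P
    rw [Finset.mul_sum]
    symm
    refine Finset.sum_bij (fun u _ => (d : GaussianInt) * u) ?_ ?_ ?_ ?_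
    · intro u hu
      rw [mem_Ps, coprime_iff] at hu
      obtain ⟨⟨hu1, hu2⟩, hu3, hu4⟩ := hu
      rw [Nat.le_div_iff_mul_le (by positivity)] at hu2
      simp only [Finset.mem_filter, mem_Zs, nm_natCast_mul]
      refine ⟨⟨⟨by positivity, by linarith⟩, (hdo.pow).mul hu4⟩, ?_⟩
      simp [Int.gcd_mul_left, hu3]
    · intro a _ b _ h
      refine mul_left_cancel₀ ?_ h
      exact_mod_cast hd0.ne'
    · intro z hz
      simp only [Finset.mem_filter, mem_Zs] at hz
      obtain ⟨⟨⟨hz1, hz2⟩, hz3⟩, hz4⟩ := hz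
      have h1 : (d : ℤ) ∣ z.re := by rw [← hz4]; exact Int.gcd_dvd_left _ _
      have h2 : (d : ℤ) ∣ z.im := by rw [← hz4]; exact Int.gcd_dvd_right _ _
      obtain ⟨x, hx⟩ := h1
      obtain ⟨y, hy⟩ := h2
      have hzu : (d : GaussianInt) * ⟨x, y⟩ = z := by
        ext
        · simp [hx]
        · simp [hy]
      refine ⟨⟨x, y⟩, ?_, hzu⟩
      rw [mem_Ps, coprime_iff]
      rw [← hzu, nm_natCast_mul] at hz1 hz2 hz3
      rw [Nat.le_div_iff_mul_le (by positivity)]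
      refine ⟨⟨Nat.pos_of_mul_pos_left hz1, by linarith⟩, ?_, (Nat.odd_mul.1 hz3).2⟩
      rw [hx, hy, Int.gcd_mul_left] at hz4
      simp only [Int.natAbs_natCast] at hz4
      exact Nat.eq_of_mul_eq_mul_left hd0 (by rw [hz4, mul_one])
    · intro u _
      rw [nm_natCast_mul]; push_cast
      rw [one_div_mul_one_div]
  · intro z hz
    simp only [Finset.mem_filter, mem_Zs] at hz
    have := hdv z
    have hle := Nat.le_of_dvd hz.1.1 this
    simp only [Finset.mem_filter, Finset.mem_Ioc]
    have hodd : Odd (Int.gcd z.re z.im) := by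
      have := Odd.of_dvd_nat hz.2 this
      exact (Nat.odd_pow_iff two_ne_zero).1 this
    refine ⟨⟨hodd.pos, ?_⟩, hodd⟩
    nlinarith [hodd.pos]

end DiagEval

namespace DiagEval

/-- Unit square cell around a Gaussian integer. -/
def cell (z : GaussianInt) : Set ℂ :=
  Complex.measurableEquivRealProd ⁻¹'
    (Set.Ico ((z.re : ℝ) - 1 / 2) (z.re + 1 / 2) ×ˢ Set.Ico ((z.im : ℝ) - 1 / 2) (z.im + 1 / 2))

lemma mem_cell {z : GaussianInt} {x : ℂ} : x ∈ cell z ↔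
    ((z.re : ℝ) - 1 / 2 ≤ x.re ∧ x.re < z.re + 1 / 2) ∧
    ((z.im : ℝ) - 1 / 2 ≤ x.im ∧ x.im < z.im + 1 / 2) := by
  simp [cell, Complex.measurableEquivRealProd_apply]

lemma measurableSet_cell (z : GaussianInt) : MeasurableSet (cell z) :=
  Complex.measurableEquivRealProd.measurable (measurableSet_Ico.prod measurableSet_Ico)

lemma volume_cell (z : GaussianInt) : volume (cell z) = 1 := by
  unfold cell
  rw [Complex.volume_preserving_equiv_real_prod.measure_preimage (measurableSet_Ico.prod measurableSet_Ico).nullMeasurableSet]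
  rw [Measure.volume_eq_prod, Measure.prod_prod, Real.volume_Ico, Real.volume_Ico]
  norm_num

lemma cell_disjoint {z w : GaussianInt} (h : z ≠ w) : Disjoint (cell z) (cell w) := by
  rw [Set.disjoint_left]
  intro x hx hy
  rw [mem_cell] at hx hy
  apply h
  have key : ∀ a b : ℤ, ∀ t : ℝ, ((a : ℝ) - 1 / 2 ≤ t ∧ t < a + 1 / 2) → ((b : ℝ) - 1 / 2 ≤ t ∧ t < b + 1 / 2) → a = b := by
    intro a b t h1 h2
    have h3 : (a : ℝ) < b + 1 := by linarith
    have h4 : (b : ℝ) < a + 1 := by linarith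
    have h3' : a < b + 1 := by exact_mod_cast h3
    have h4' : b < a + 1 := by exact_mod_cast h4
    omega
  exact Zsqrtd.ext (key _ _ _ hx.1 hy.1) (key _ _ _ hx.2 hy.2)

lemma volume_cells (s : Finset GaussianInt) : volume (⋃ z ∈ s, cell z) = (s.card : ENNReal) := by
  rw [measure_biUnion_finset (fun a _ b _ h => cell_disjoint h) (fun b _ => measurableSet_cell b)]
  simp [volume_cell]

lemma nm_real (z : GaussianInt) : (nm z : ℝ) = (z.re : ℝ) ^ 2 + (z.im : ℝ) ^ 2 := by
  exact_mod_cast nm_cast z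

lemma norm_toC (z : GaussianInt) : ‖(⟨z.re, z.im⟩ : ℂ)‖ = √(nm z : ℝ) := by
  rw [nm_real, Complex.norm_def, Complex.normSq_apply]; congr 1; ring

lemma cell_dist {z : GaussianInt} {x : ℂ} (hx : x ∈ cell z) : ‖x - (⟨z.re, z.im⟩ : ℂ)‖ ≤ 1 := by
  rw [mem_cell] at hx
  rw [Complex.norm_def, Real.sqrt_le_iff, Complex.normSq_apply]
  refine ⟨zero_le_one, ?_⟩
  simp only [Complex.sub_re, Complex.sub_im]
  have h1 : |x.re - z.re| ≤ 1 / 2 := abs_le.2 ⟨by linarith, by linarith⟩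
  have h2 : |x.im - z.im| ≤ 1 / 2 := abs_le.2 ⟨by linarith, by linarith⟩
  have h3 := abs_mul_abs_self (x.re - z.re)
  have h4 := abs_mul_abs_self (x.im - z.im)
  nlinarith [abs_nonneg (x.re - z.re), abs_nonneg (x.im - z.im)]

lemma exists_cell (x : ℂ) : ∃ z : GaussianInt, x ∈ cell z := by
  refine ⟨⟨⌊x.re + 1 / 2⌋, ⌊x.im + 1 / 2⌋⟩, ?_⟩
  rw [mem_cell]
  have h1 := Int.floor_le (x.re + 1 / 2)
  have h2 := Int.lt_floor_add_one (x.re + 1 / 2)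
  have h3 := Int.floor_le (x.im + 1 / 2)
  have h4 := Int.lt_floor_add_one (x.im + 1 / 2)
  refine ⟨⟨?_, ?_⟩, ?_, ?_⟩ <;> simp only <;> linarith

lemma card_upper (N : ℕ) : ((insert 0 (Zs N)).card : ℝ) ≤ π * (√N + 1) ^ 2 := by
  have hsub : (⋃ z ∈ insert 0 (Zs N), cell z) ⊆ Metric.closedBall (0 : ℂ) (√N + 1) := by
    intro x hx
    simp only [Set.mem_iUnion, exists_prop] at hx
    obtain ⟨z, hz, hx⟩ := hx
    have hn : nm z ≤ N := by
      rw [Finset.mem_insert] at hz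
      rcases hz with rfl | hz
      · simp [nm]
      · exact (mem_Zs.1 hz).2
    rw [mem_closedBall_zero_iff]
    have h1 := cell_dist hx
    have h2 : √(nm z : ℝ) ≤ √N := Real.sqrt_le_sqrt (by exact_mod_cast hn)
    rw [← norm_toC] at h2
    have h3 := norm_add_le (x - (⟨z.re, z.im⟩ : ℂ)) ⟨z.re, z.im⟩
    rw [sub_add_cancel] at h3
    linarith
  have := measure_mono (μ := volume) hsub
  rw [volume_cells, Complex.volume_closedBall, ← ENNReal.ofReal_pow (by positivity)] at this
  have h2 := ENNReal.toReal_mono (by finiteness) this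
  rw [ENNReal.toReal_mul, ENNReal.toReal_ofReal (by positivity)] at h2
  simp at h2
  linarith

lemma card_lower (N : ℕ) (hN : 1 ≤ N) : π * (√N - 1) ^ 2 ≤ ((insert 0 (Zs N)).card : ℝ) := by
  have h1N : 1 ≤ √(N : ℝ) := by rw [Real.one_le_sqrt]; exact_mod_cast hN
  have hsub : Metric.closedBall (0 : ℂ) (√N - 1) ⊆ (⋃ z ∈ insert 0 (Zs N), cell z) := by
    intro x hx
    rw [mem_closedBall_zero_iff] at hx
    obtain ⟨z, hz⟩ := exists_cell x
    simp only [Set.mem_iUnion, exists_prop]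
    refine ⟨z, ?_, hz⟩
    have h1 := cell_dist hz
    have h3 := norm_sub_le x (x - (⟨z.re, z.im⟩ : ℂ))
    rw [sub_sub_cancel, norm_toC] at h3
    have h4 : √(nm z : ℝ) ≤ √N := by linarith
    rw [Real.sqrt_le_sqrt_iff (by positivity)] at h4
    rw [Finset.mem_insert, mem_Zs]
    by_cases h0 : nm z = 0
    · left; exact nm_eq_zero.1 h0
    · right; exact ⟨Nat.pos_of_ne_zero h0, by exact_mod_cast h4⟩
  have := measure_mono (μ := volume) hsub
  rw [volume_cells, Complex.volume_closedBall, ← ENNReal.ofReal_pow (by linarith)] at this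
  have h2 := ENNReal.toReal_mono (by finiteness) this
  rw [ENNReal.toReal_mul, ENNReal.toReal_ofReal (by positivity)] at h2
  simp at h2
  linarith

lemma gauss_circle (N : ℕ) (hN : 1 ≤ N) : |((Zs N).card : ℝ) - π * N| ≤ 16 * √N := by
  have h1 := card_upper N
  have h2 := card_lower N hN
  have h0 : (0 : GaussianInt) ∉ Zs N := by rw [mem_Zs]; simp [nm]
  rw [Finset.card_insert_of_notMem h0] at h1 h2
  push_cast at h1 h2
  have h1N : 1 ≤ √(N : ℝ) := by rw [Real.one_le_sqrt]; exact_mod_cast hN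
  have hs : √(N : ℝ) ^ 2 = N := Real.sq_sqrt (by positivity)
  have hp := Real.pi_lt_four
  have hp0 := Real.pi_pos
  set s := √(N : ℝ)
  rw [abs_le]
  constructor
  · have : π * (s - 1) ^ 2 = π * s ^ 2 - 2 * (π * s) + π := by ring
    rw [hs] at this
    have : π * s ≤ 4 * s := by nlinarith
    linarith
  · have : π * (s + 1) ^ 2 = π * s ^ 2 + 2 * (π * s) + π := by ring
    rw [hs] at this
    have : π * s ≤ 4 * s := by nlinarith
    linarith

end DiagEval

namespace DiagEval

lemma sum_by_norm (S : ℕ → Finset GaussianInt) (pr : GaussianInt → Prop)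
    (hS : ∀ N z, z ∈ S N ↔ (0 < nm z ∧ nm z ≤ N) ∧ pr z) :
    ∃ c : ℕ → ℝ, ∀ (N : ℕ) (h : ℕ → ℝ), ∑ z ∈ S N, h (nm z) = ∑ n ∈ Finset.Ioc 0 N, c n * h n := by
  refine ⟨fun n => (((S n).filter (fun z => nm z = n)).card : ℝ), fun N h => ?_⟩
  rw [← Finset.sum_fiberwise_of_maps_to (g := nm) (t := Finset.Ioc 0 N)]
  · apply Finset.sum_congr rfl
    intro n hn
    rw [Finset.mem_Ioc] at hn
    have : (S N).filter (fun z => nm z = n) = (S n).filter (fun z => nm z = n) := by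
      ext z
      simp only [Finset.mem_filter, hS]
      constructor
      · rintro ⟨⟨⟨h1, h2⟩, h3⟩, h4⟩; exact ⟨⟨⟨h1, h4.le⟩, h3⟩, h4⟩
      · rintro ⟨⟨⟨h1, h2⟩, h3⟩, h4⟩; exact ⟨⟨⟨h1, h2.trans hn.2⟩, h3⟩, h4⟩
    rw [this, ← nsmul_eq_mul, ← Finset.sum_const]
    apply Finset.sum_congr rfl
    intro z hz
    rw [(Finset.mem_filter.1 hz).2]
  · intro z hz
    rw [Finset.mem_Ioc]; exact ((hS N z).1 hz).1

lemma log_step (N : ℕ) (hN : 1 ≤ N) :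
    1 / ((N : ℝ) + 1) ≤ log (N + 1) - log N ∧ log ((N : ℝ) + 1) - log N ≤ 1 / N := by
  have hN0 : (0 : ℝ) < N := by exact_mod_cast hN
  rw [← Real.log_div (by positivity) (by positivity)]
  constructor
  · have := Real.one_sub_inv_le_log_of_pos (x := ((N : ℝ) + 1) / N) (by positivity)
    refine le_trans (le_of_eq ?_) this
    field_simp; ring
  · have := Real.log_le_sub_one_of_pos (x := ((N : ℝ) + 1) / N) (by positivity)
    refine le_trans this (le_of_eq ?_)
    field_simp; ring

lemma abel_log (c : ℕ → ℝ) (hc : ∀ N : ℕ, 1 ≤ N → |∑ n ∈ Finset.Ioc 0 N, c n - π * N| ≤ 16 * √N)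
    (N : ℕ) (hN : 1 ≤ N) : |∑ n ∈ Finset.Ioc 0 N, c n * (1 / (n : ℝ)) - π * log N| ≤ 60 := by
  have key : |∑ n ∈ Finset.Ioc 0 N, c n * (1 / (n : ℝ)) - (∑ n ∈ Finset.Ioc 0 N, c n) / N - π * log N|
      ≤ 40 * (1 - 1 / √N) := by
    induction N, hN using Nat.le_induction with
    | base => simp
    | succ N hN ih =>
      rw [Finset.sum_Ioc_succ_top (Nat.zero_le _), Finset.sum_Ioc_succ_top (Nat.zero_le _)]
      have hG := hc N hN
      set G := ∑ n ∈ Finset.Ioc 0 N, c n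
      set B := ∑ n ∈ Finset.Ioc 0 N, c n * (1 / (n : ℝ))
      have hN0 : (0 : ℝ) < N := by exact_mod_cast hN
      have hN1 : (1 : ℝ) ≤ N := by exact_mod_cast hN
      push_cast
      obtain ⟨hl1, hl2⟩ := log_step N hN
      have hstep : |G / (N * (N + 1)) - π * (log (N + 1) - log N)| ≤ 40 * (1 / √N - 1 / √((N : ℝ) + 1)) := by
        set s := √(N : ℝ) with hs
        set t := √((N : ℝ) + 1) with ht
        have hs0 : 0 < s := Real.sqrt_pos.2 hN0
        have ht0 : 0 < t := Real.sqrt_pos.2 (by linarith)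
        have hs2 : s ^ 2 = N := Real.sq_sqrt hN0.le
        have ht2 : t ^ 2 = N + 1 := Real.sq_sqrt (by linarith)
        have hst : s ≤ t := Real.sqrt_le_sqrt (by linarith)
        have h1s : 1 ≤ s := by rw [hs, Real.one_le_sqrt]; exact hN1
        have h1 : 1 / (2 * s * t ^ 2) ≤ 1 / s - 1 / t := by
          have : 1 / s - 1 / t = 1 / (s * t * (s + t)) := by
            have hne : s + t ≠ 0 := by positivity
            field_simp
            nlinarith
          rw [this]
          apply one_div_le_one_div_of_le (by positivity)
          nlinarith [mul_pos hs0 ht0]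
        have h2 : |G / (N * (N + 1)) - π / (N + 1)| ≤ 16 * (1 / (s * t ^ 2)) := by
          have : G / (N * (N + 1)) - π / (N + 1) = (G - π * N) * (1 / (N * (N + 1))) := by
            field_simp
          rw [this, abs_mul, abs_of_pos (a := 1 / ((N : ℝ) * (N + 1))) (by positivity)]
          calc _ ≤ 16 * s * (1 / (N * (N + 1))) := by gcongr
            _ = _ := by rw [← ht2, ← hs2]; field_simp
        have h3 : |π / (N + 1) - π * (log (N + 1) - log N)| ≤ 4 * (1 / (s * t ^ 2)) := by
          have e : 1 / (N : ℝ) - 1 / (N + 1) ≤ 1 / (s * t ^ 2) := by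
            have : 1 / (N : ℝ) - 1 / (N + 1) = 1 / (s ^ 2 * t ^ 2) := by
              rw [hs2, ht2]; field_simp; ring
            rw [this]
            apply one_div_le_one_div_of_le (by positivity)
            have : s ≤ s ^ 2 := by nlinarith
            gcongr
          have : π / (N + 1) - π * (log (N + 1) - log N) = - (π * ((log (N + 1) - log N) - 1 / (N + 1))) := by ring
          rw [this, abs_neg, abs_mul, abs_of_pos Real.pi_pos, abs_of_nonneg (by linarith)]
          have hp := Real.pi_lt_four
          apply mul_le_mul hp.le (by linarith) (by linarith) (by norm_num)
        have h4 := abs_add_le (G / (N * (N + 1)) - π / (N + 1)) (π / (N + 1) - π * (log (N + 1) - log N))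
        rw [sub_add_sub_cancel] at h4
        have h5 : 1 / (2 * s * t ^ 2) = 1 / 2 * (1 / (s * t ^ 2)) := by field_simp
        linarith
      have e : B + c (N + 1) * (1 / ((N : ℝ) + 1)) - (G + c (N + 1)) / (N + 1) - π * log (N + 1) =
          (B - G / N - π * log N) + (G / (N * (N + 1)) - π * (log (N + 1) - log N)) := by
        field_simp; ring
      rw [e]
      refine (abs_add_le _ _).trans ?_
      linarith
  have hG := hc N hN
  set G := ∑ n ∈ Finset.Ioc 0 N, c n
  set B := ∑ n ∈ Finset.Ioc 0 N, c n * (1 / (n : ℝ))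
  have hN0 : (0 : ℝ) < N := by exact_mod_cast hN
  have hN1 : (1 : ℝ) ≤ N := by exact_mod_cast hN
  have hs : √(N : ℝ) ≤ N := by rw [Real.sqrt_le_left hN0.le]; nlinarith
  have h1 : |G / N| ≤ 20 := by
    rw [abs_div, abs_of_pos hN0, div_le_iff₀ hN0]
    have hp := Real.pi_lt_four
    have hp0 := Real.pi_pos
    have : |G| ≤ |G - π * N| + |π * N| := by simpa using abs_add_le (G - π * N) (π * N)
    rw [abs_of_pos (a := π * (N : ℝ)) (by positivity)] at this
    nlinarith
  have h2 : 0 ≤ 1 / √(N : ℝ) := by positivity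
  have := abs_add_le (B - G / N - π * log N) (G / N)
  have e : B - G / N - π * log N + G / N = B - π * log N := by ring
  rw [e] at this
  linarith

lemma A_asymp (N : ℕ) (hN : 1 ≤ N) : |A N - π * log N| ≤ 60 := by
  obtain ⟨c, hc⟩ := sum_by_norm Zs (fun _ => True) (by intro N z; simp [mem_Zs])
  unfold A
  rw [hc N (fun n => 1 / (n : ℝ))]
  apply abel_log c _ N hN
  intro M hM
  have := hc M (fun _ => 1)
  simp at this
  rw [← this]
  exact gauss_circle M hM

lemma log_floor (N m : ℕ) (hm : 1 ≤ m) (h : m ≤ N) :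
    |log ((N / m : ℕ) : ℝ) - (log N - log m)| ≤ log 2 := by
  have hm0 : (0 : ℝ) < m := by exact_mod_cast hm
  have hN0 : (0 : ℝ) < N := by exact_mod_cast hm.trans h
  have hk : 1 ≤ N / m := (Nat.one_le_div_iff (by omega)).2 h
  have hk0 : (0 : ℝ) < ((N / m : ℕ) : ℝ) := by exact_mod_cast hk
  have h1 : ((N / m : ℕ) : ℝ) ≤ N / m := Nat.cast_div_le
  have h2 : (N : ℝ) / m ≤ 2 * ((N / m : ℕ) : ℝ) := by
    rw [div_le_iff₀ hm0]
    have h3 : N < m * (N / m + 1) := Nat.lt_mul_div_succ N (by omega)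
    have h4 : N ≤ 2 * (N / m) * m := by nlinarith
    exact_mod_cast h4
  rw [← Real.log_div hN0.ne' hm0.ne', abs_sub_comm, abs_of_nonneg]
  · have := Real.log_le_log (by positivity) h2
    rw [Real.log_mul two_ne_zero hk0.ne'] at this
    linarith
  · have := Real.log_le_log hk0 h1
    linarith

lemma Q_asymp : ∃ C : ℝ, 0 ≤ C ∧ ∀ N : ℕ, 1 ≤ N → |Q N - π / 2 * log N| ≤ C := by
  refine ⟨60 + 30 + 4, by norm_num, fun N hN => ?_⟩
  rw [Q_eq_A]
  have h1 := A_asymp N hN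
  have hl2 := Real.log_two_lt_d9
  have hl20 : 0 < log 2 := Real.log_pos (by norm_num)
  have hp := Real.pi_lt_four
  have hp0 := Real.pi_pos
  rw [abs_le] at h1 ⊢
  by_cases h2 : 2 ≤ N
  · have h3 := A_asymp (N / 2) (by omega)
    have h4 := log_floor N 2 (by norm_num) h2
    rw [abs_le] at h3 h4
    push_cast at h4
    have h5 : π * log ((N / 2 : ℕ) : ℝ) ≤ π * log N := mul_le_mul_of_nonneg_left (by linarith) hp0.le
    have h6 : π * (log N - 2) ≤ π * log ((N / 2 : ℕ) : ℝ) := mul_le_mul_of_nonneg_left (by linarith) hp0.le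
    constructor <;> nlinarith
  · have : N = 1 := by omega
    subst this
    have h0 : A (1 / 2) = 0 := by
      have : Zs (1 / 2) = ∅ := by
        ext z; rw [mem_Zs]; simp; omega
      rw [A, this]; simp
    rw [h0]
    simp at h1 ⊢
    constructor <;> linarith

lemma abel_log2 (b : ℕ → ℝ) (c C : ℝ) (hc : 0 ≤ c) (hb : ∀ N : ℕ, 1 ≤ N → |∑ n ∈ Finset.Ioc 0 N, b n - c * log N| ≤ C)
    (N : ℕ) (hN : 1 ≤ N) :
    |∑ n ∈ Finset.Ioc 0 N, b n * (log N - log n) - c / 2 * log N ^ 2| ≤ (C + c) * log N := by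
  induction N, hN using Nat.le_induction with
  | base => simp
  | succ N hN ih =>
    rw [Finset.sum_Ioc_succ_top (Nat.zero_le _)]
    have hP := hb N hN
    have hN1 : (1 : ℝ) ≤ N := by exact_mod_cast hN
    obtain ⟨hl1, hl2⟩ := log_step N hN
    push_cast
    set D := log ((N : ℝ) + 1) - log N with hD
    have e1 : ∑ n ∈ Finset.Ioc 0 N, b n * (log ((N : ℝ) + 1) - log n) =
        ∑ n ∈ Finset.Ioc 0 N, b n * (log N - log n) + (∑ n ∈ Finset.Ioc 0 N, b n) * D := by
      rw [Finset.sum_mul, ← Finset.sum_add_distrib]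
      apply Finset.sum_congr rfl
      intro n _
      rw [hD]; ring
    rw [e1]
    set S := ∑ n ∈ Finset.Ioc 0 N, b n * (log N - log n)
    set p := ∑ n ∈ Finset.Ioc 0 N, b n
    have hD0 : 0 ≤ D := le_trans (by positivity) hl1
    have hD1 : D ≤ 1 := hl2.trans (by rw [div_le_one (by linarith)]; exact hN1)
    have hL : log ((N : ℝ) + 1) = log N + D := by rw [hD]; ring
    rw [hL]
    have e2 : S + p * D + b (N + 1) * (log N + D - (log N + D)) - c / 2 * (log N + D) ^ 2 =
      (S - c / 2 * log N ^ 2) + ((p - c * log N) * D + (- (c / 2 * D ^ 2))) := by ring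
    rw [e2]
    refine (abs_add_le _ _).trans ?_
    have h3 := abs_add_le ((p - c * log N) * D) (- (c / 2 * D ^ 2))
    rw [abs_neg, abs_mul, abs_of_nonneg hD0, abs_of_nonneg (a := c / 2 * D ^ 2) (by positivity)] at h3
    have h4 : |p - c * log N| * D ≤ C * D := mul_le_mul_of_nonneg_right hP hD0
    have h5 : c / 2 * D ^ 2 ≤ c * D := by nlinarith [mul_nonneg hc hD0]
    linarith

end DiagEval

namespace DiagEval

/-- `1/d²` on odd `d`, zero otherwise. -/
def fo (d : ℕ) : ℝ := open Classical in if Odd d then 1 / (d : ℝ) ^ 2 else 0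

lemma fo_odd {d : ℕ} (h : Odd d) : fo d = 1 / (d : ℝ) ^ 2 := by unfold fo; rw [if_pos h]
lemma fo_not_odd {d : ℕ} (h : ¬ Odd d) : fo d = 0 := by unfold fo; rw [if_neg h]
lemma fo_nonneg (d : ℕ) : 0 ≤ fo d := by unfold fo; split_ifs <;> positivity

lemma hasSum_fo : HasSum fo (π ^ 2 / 8) := by
  have hz := hasSum_zeta_two
  have he : HasSum (fun k : ℕ => 1 / (((2 * k : ℕ) : ℝ)) ^ 2) (1 / 4 * (π ^ 2 / 6)) := by
    have := hz.mul_left (1 / 4)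
    refine this.congr_fun ?_ |> fun h => h
    intro k; push_cast; ring
  have ho : Summable (fun k : ℕ => 1 / (((2 * k + 1 : ℕ) : ℝ)) ^ 2) :=
    hz.summable.comp_injective (i := fun k : ℕ => 2 * k + 1) (fun a b h => by simp at h; exact h)
  have h1 := HasSum.even_add_odd (f := fun n : ℕ => 1 / (n : ℝ) ^ 2) he ho.hasSum
  have h2 := h1.unique hz
  have h3 : HasSum (fun k : ℕ => fo (2 * k)) 0 := by
    have : (fun k : ℕ => fo (2 * k)) = fun _ => 0 := by
      funext k; apply fo_not_odd; simp
    rw [this]; exact hasSum_zero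
  have h4 : HasSum (fun k : ℕ => fo (2 * k + 1)) (π ^ 2 / 8) := by
    have e : (fun k : ℕ => fo (2 * k + 1)) = fun k : ℕ => 1 / (((2 * k + 1 : ℕ) : ℝ)) ^ 2 := by
      funext k; apply fo_odd; simp
    rw [e]
    convert ho.hasSum using 1
    linarith
  have := HasSum.even_add_odd h3 h4
  rwa [zero_add] at this

lemma log_sq_bound (N d : ℕ) (hN : 1 ≤ N) (hd : 1 ≤ d) :
    |log ((N / d ^ 2 : ℕ) : ℝ) - log N| ≤ 4 * √d := by
  have hd1 : (1 : ℝ) ≤ d := by exact_mod_cast hd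
  have hN1 : (1 : ℝ) ≤ N := by exact_mod_cast hN
  have hs0 : 0 < √(d : ℝ) := Real.sqrt_pos.2 (by linarith)
  have h1 : log (d : ℝ) ≤ 2 * (√d - 1) := by
    have := Real.log_le_sub_one_of_pos hs0
    rw [Real.log_sqrt (by linarith)] at this
    linarith
  have hlN : 0 ≤ log (N : ℝ) := Real.log_nonneg hN1
  have hld : 0 ≤ log (d : ℝ) := Real.log_nonneg hd1
  have hl2 := Real.log_two_lt_d9
  by_cases h : d ^ 2 ≤ N
  · have h2 := log_floor N (d ^ 2) (Nat.one_le_pow _ _ hd) h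
    push_cast at h2
    rw [Real.log_pow] at h2
    push_cast at h2
    rw [abs_le] at h2 ⊢
    constructor <;> linarith
  · rw [Nat.div_eq_of_lt (by omega)]
    have h3 : (N : ℝ) ≤ d ^ 2 := by exact_mod_cast (by omega : N ≤ d ^ 2)
    have h4 := Real.log_le_log (by linarith) h3
    rw [Real.log_pow] at h4
    push_cast at h4 ⊢
    rw [Real.log_zero, zero_sub, abs_neg, abs_of_nonneg hlN]
    linarith

lemma Lam_asymp : ∃ C : ℝ, 0 ≤ C ∧ ∀ N : ℕ, 1 ≤ N →
    |∑ d ∈ (Finset.Ioc 0 N).filter Odd, 1 / (d : ℝ) ^ 2 * log ((N / d ^ 2 : ℕ) : ℝ) - π ^ 2 / 8 * log N| ≤ C := by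
  have hsum : Summable (fun d : ℕ => 4 * ((d : ℝ) ^ (3 / 2 : ℝ))⁻¹) :=
    (Real.summable_nat_rpow_inv.2 (by norm_num)).mul_left 4
  refine ⟨∑' d : ℕ, 4 * ((d : ℝ) ^ (3 / 2 : ℝ))⁻¹, tsum_nonneg (fun d => by positivity), fun N hN => ?_⟩
  have h1 : HasSum (fun d : ℕ => fo d * log ((N / d ^ 2 : ℕ) : ℝ))
      (∑ d ∈ (Finset.Ioc 0 N).filter Odd, 1 / (d : ℝ) ^ 2 * log ((N / d ^ 2 : ℕ) : ℝ)) := by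
    have : ∑ d ∈ (Finset.Ioc 0 N).filter Odd, 1 / (d : ℝ) ^ 2 * log ((N / d ^ 2 : ℕ) : ℝ) =
        ∑ d ∈ (Finset.Ioc 0 N).filter Odd, fo d * log ((N / d ^ 2 : ℕ) : ℝ) := by
      apply Finset.sum_congr rfl
      intro d hd
      rw [fo_odd (Finset.mem_filter.1 hd).2]
    rw [this]
    apply hasSum_sum_of_ne_finset_zero
    intro d hd
    by_cases ho : Odd d
    · have : N < d := by
        by_contra hlt
        exact hd (Finset.mem_filter.2 ⟨Finset.mem_Ioc.2 ⟨ho.pos, by omega⟩, ho⟩)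
      rw [Nat.div_eq_of_lt (by nlinarith)]
      simp
    · rw [fo_not_odd ho, zero_mul]
  have h2 := h1.sub (hasSum_fo.mul_right (log (N : ℝ)))
  have h3 := tsum_of_norm_bounded hsum.hasSum (f := fun d : ℕ => fo d * log ((N / d ^ 2 : ℕ) : ℝ) - fo d * log (N : ℝ)) ?_
  · rw [h2.tsum_eq, Real.norm_eq_abs] at h3
    exact h3
  · intro d
    rw [← mul_sub, Real.norm_eq_abs, abs_mul, abs_of_nonneg (fo_nonneg d)]
    by_cases ho : Odd d
    · rw [fo_odd ho]
      have hd0 : (0 : ℝ) < d := by exact_mod_cast ho.pos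
      have hb := log_sq_bound N d hN ho.pos
      have e : 1 / (d : ℝ) ^ 2 * (4 * √d) = 4 * ((d : ℝ) ^ (3 / 2 : ℝ))⁻¹ := by
        have : (d : ℝ) ^ (3 / 2 : ℝ) * √d = d ^ 2 := by
          rw [Real.sqrt_eq_rpow, ← Real.rpow_add hd0]
          norm_num
        rw [← this]
        have : √(d : ℝ) ≠ 0 := (Real.sqrt_pos.2 hd0).ne'
        field_simp
      rw [← e]
      gcongr
    · rw [fo_not_odd ho, zero_mul]; positivity

lemma P_zero : P 0 = 0 := by
  have : Ps 0 = ∅ := by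
    ext z; rw [mem_Ps]; simp; omega
  rw [P, this]; simp

lemma P_asymp : ∃ C : ℝ, 0 ≤ C ∧ ∀ N : ℕ, |P N - 4 / π * log N| ≤ C := by
  obtain ⟨C1, hC1, hQ⟩ := Q_asymp
  obtain ⟨C2, hC2, hL⟩ := Lam_asymp
  have hp0 := Real.pi_pos
  set K := C1 + 4 / π * C2 with hK
  have hK0 : 0 ≤ K := by positivity
  refine ⟨2 * K, by positivity, fun N => ?_⟩
  induction N using Nat.strong_induction_on with
  | _ N ih =>
  rcases Nat.eq_zero_or_pos N with h0 | hN
  · subst h0; rw [P_zero]; simpa using hK0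
  · have h1 := hQ N hN
    have h2 := hL N hN
    rw [Q_eq_P] at h1
    have hins : (Finset.Ioc 0 N).filter Odd = insert 1 ((Finset.Ioc 1 N).filter Odd) := by
      ext d
      simp only [Finset.mem_filter, Finset.mem_Ioc, Finset.mem_insert]
      constructor
      · rintro ⟨⟨h1, h2⟩, h3⟩
        by_cases hd : d = 1
        · left; exact hd
        · right; exact ⟨⟨by omega, h2⟩, h3⟩
      · rintro (rfl | ⟨⟨h1, h2⟩, h3⟩)
        · exact ⟨⟨by omega, by omega⟩, odd_one⟩
        · exact ⟨⟨by omega, h2⟩, h3⟩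
    have hn1 : 1 ∉ (Finset.Ioc 1 N).filter Odd := by simp
    have hE : |∑ d ∈ (Finset.Ioc 0 N).filter Odd, 1 / (d : ℝ) ^ 2 * (P (N / d ^ 2) - 4 / π * log ((N / d ^ 2 : ℕ) : ℝ))| ≤ K := by
      have e : ∑ d ∈ (Finset.Ioc 0 N).filter Odd, 1 / (d : ℝ) ^ 2 * (P (N / d ^ 2) - 4 / π * log ((N / d ^ 2 : ℕ) : ℝ)) =
        (∑ d ∈ (Finset.Ioc 0 N).filter Odd, 1 / (d : ℝ) ^ 2 * P (N / d ^ 2) - π / 2 * log N) -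
        4 / π * (∑ d ∈ (Finset.Ioc 0 N).filter Odd, 1 / (d : ℝ) ^ 2 * log ((N / d ^ 2 : ℕ) : ℝ) - π ^ 2 / 8 * log N) := by
        have : 4 / π * (π ^ 2 / 8 * log N) = π / 2 * log N := by field_simp; ring
        rw [mul_sub, this, Finset.mul_sum, sub_sub_sub_cancel_right, ← Finset.sum_sub_distrib]
        apply Finset.sum_congr rfl
        intro d _; ring
      rw [e]
      refine (abs_sub _ _).trans ?_
      rw [abs_mul, abs_of_pos (a := 4 / π) (by positivity)]
      have : 4 / π * |∑ d ∈ (Finset.Ioc 0 N).filter Odd, 1 / (d : ℝ) ^ 2 * log ((N / d ^ 2 : ℕ) : ℝ) - π ^ 2 / 8 * log N| ≤ 4 / π * C2 := by gcongr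
      linarith
    rw [hins, Finset.sum_insert hn1] at hE
    simp only [Nat.cast_one, one_pow, div_one, one_mul, Nat.div_one] at hE
    set R := ∑ d ∈ (Finset.Ioc 1 N).filter Odd, 1 / (d : ℝ) ^ 2 * (P (N / d ^ 2) - 4 / π * log ((N / d ^ 2 : ℕ) : ℝ)) with hR
    have hRb : |R| ≤ K := by
      have hf : ∑ d ∈ (Finset.Ioc 1 N).filter Odd, 1 / (d : ℝ) ^ 2 ≤ 1 / 2 := by
        have h := sum_le_hasSum (insert 1 ((Finset.Ioc 1 N).filter Odd)) (fun d _ => fo_nonneg d) hasSum_fo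
        rw [Finset.sum_insert hn1, fo_odd odd_one] at h
        have e : ∑ d ∈ (Finset.Ioc 1 N).filter Odd, fo d = ∑ d ∈ (Finset.Ioc 1 N).filter Odd, 1 / (d : ℝ) ^ 2 :=
          Finset.sum_congr rfl (fun d hd => fo_odd (Finset.mem_filter.1 hd).2)
        rw [e] at h
        have hp := Real.pi_lt_d2
        have : π ^ 2 ≤ 3.15 ^ 2 := by gcongr
        norm_num at h this
        simp only [one_div]
        linarith
      calc |R| ≤ ∑ d ∈ (Finset.Ioc 1 N).filter Odd, |1 / (d : ℝ) ^ 2 * (P (N / d ^ 2) - 4 / π * log ((N / d ^ 2 : ℕ) : ℝ))| :=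
            Finset.abs_sum_le_sum_abs _ _
        _ ≤ ∑ d ∈ (Finset.Ioc 1 N).filter Odd, 1 / (d : ℝ) ^ 2 * (2 * K) := by
            apply Finset.sum_le_sum
            intro d hd
            rw [Finset.mem_filter, Finset.mem_Ioc] at hd
            rw [abs_mul, abs_of_nonneg (a := 1 / (d : ℝ) ^ 2) (by positivity)]
            apply mul_le_mul_of_nonneg_left _ (by positivity)
            apply ih
            exact Nat.div_lt_self hN (by nlinarith)
        _ = (∑ d ∈ (Finset.Ioc 1 N).filter Odd, 1 / (d : ℝ) ^ 2) * (2 * K) := by rw [Finset.sum_mul]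
        _ ≤ 1 / 2 * (2 * K) := by gcongr
        _ = K := by ring
    have := abs_sub (P N - 4 / π * log N + R) R
    rw [add_sub_cancel_right] at this
    linarith

end DiagEval

namespace DiagEval

lemma T_asymp : ∃ C : ℝ, 0 ≤ C ∧ ∀ N : ℕ, 1 ≤ N →
    |∑ n ∈ Finset.Ioc 0 N, (r2 n : ℝ) ^ 2 * (1 / (n : ℝ)) - 2 * log N ^ 2| ≤ C * (log N + 1) := by
  obtain ⟨C1, hC1, hP⟩ := P_asymp
  obtain ⟨c, hc⟩ := sum_by_norm Ps (fun u => IsCoprime u (star u)) (fun N z => mem_Ps)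
  have hp0 := Real.pi_pos
  have hp4 := Real.pi_lt_four
  refine ⟨64 * (4 / π + C1) + π * (C1 + 4 / π), by positivity, fun N hN => ?_⟩
  have hN1 : (1 : ℝ) ≤ N := by exact_mod_cast hN
  have hl0 : 0 ≤ log (N : ℝ) := Real.log_nonneg hN1
  rw [conv_identity N (fun n => 1 / (n : ℝ))]
  have e1 : ∑ u ∈ Ps N, ∑ g ∈ Zs (N / nm u), 1 / ((nm u * nm g : ℕ) : ℝ) =
      ∑ u ∈ Ps N, 1 / (nm u : ℝ) * A (N / nm u) := by
    apply Finset.sum_congr rfl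
    intro u _
    rw [A, Finset.mul_sum]
    apply Finset.sum_congr rfl
    intro g _
    push_cast
    rw [one_div_mul_one_div]
  rw [e1]
  have hl2 := Real.log_two_lt_d9
  have h1 : |∑ u ∈ Ps N, 1 / (nm u : ℝ) * A (N / nm u) - π * ∑ u ∈ Ps N, 1 / (nm u : ℝ) * (log N - log (nm u))| ≤ 64 * P N := by
    rw [Finset.mul_sum, ← Finset.sum_sub_distrib, P, Finset.mul_sum]
    refine (Finset.abs_sum_le_sum_abs _ _).trans (Finset.sum_le_sum ?_)
    intro u hu
    rw [mem_Ps] at hu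
    have ha := A_asymp (N / nm u) ((Nat.one_le_div_iff hu.1.1).2 hu.1.2)
    have hb := log_floor N (nm u) hu.1.1 hu.1.2
    have e : 1 / (nm u : ℝ) * A (N / nm u) - π * (1 / (nm u : ℝ) * (log N - log (nm u))) =
      1 / (nm u : ℝ) * ((A (N / nm u) - π * log ((N / nm u : ℕ) : ℝ)) + π * (log ((N / nm u : ℕ) : ℝ) - (log N - log (nm u)))) := by ring
    rw [e, abs_mul, abs_of_nonneg (a := 1 / (nm u : ℝ)) (by positivity), mul_comm]
    apply mul_le_mul_of_nonneg_right _ (by positivity)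
    refine (abs_add_le _ _).trans ?_
    rw [abs_mul, abs_of_pos hp0]
    have : π * |log ((N / nm u : ℕ) : ℝ) - (log N - log (nm u))| ≤ 4 * 1 :=
      mul_le_mul hp4.le (by linarith) (abs_nonneg _) (by norm_num)
    linarith
  have h2 := abel_log2 (fun n => c n * (1 / (n : ℝ))) (4 / π) C1 (by positivity) (by
    intro M _
    have := hc M (fun n => 1 / (n : ℝ))
    rw [← this]
    exact hP M) N hN
  have e2 := hc N (fun n => 1 / (n : ℝ) * (log N - log n))
  simp only [mul_assoc] at h2
  rw [← e2] at h2
  have h3 := hP N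
  rw [abs_le] at h3
  have e3 : π * (4 / π / 2 * log N ^ 2) = 2 * log (N : ℝ) ^ 2 := by field_simp; norm_num
  set X := ∑ u ∈ Ps N, 1 / (nm u : ℝ) * A (N / nm u)
  set Z := ∑ u ∈ Ps N, 1 / (nm u : ℝ) * (log N - log (nm u))
  have e4 : X - 2 * log (N : ℝ) ^ 2 = (X - π * Z) + π * (Z - 4 / π / 2 * log N ^ 2) := by
    rw [mul_sub, e3]; ring
  rw [e4]
  refine (abs_add_le _ _).trans ?_
  rw [abs_mul, abs_of_pos hp0]
  have h5 : π * |Z - 4 / π / 2 * log N ^ 2| ≤ π * ((C1 + 4 / π) * log N) := by gcongr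
  have h6 : P N ≤ (4 / π + C1) * (log N + 1) := by
    have : 0 ≤ C1 * log (N : ℝ) := by positivity
    have : 0 ≤ 4 / π := by positivity
    linarith
  have h7 : 0 ≤ π * (C1 + 4 / π) := by positivity
  linarith

lemma S_bound : ∃ C : ℝ, 0 < C ∧ ∀ N : ℕ, 1 ≤ N →
    ∑ n ∈ Finset.Ioc 0 N, (r2 n : ℝ) ^ 2 ≤ C * (N * log (2 * N)) := by
  obtain ⟨C1, hC1, hP⟩ := P_asymp
  refine ⟨20 * (2 + 2 * C1), by positivity, fun N hN => ?_⟩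
  have hN1 : (1 : ℝ) ≤ N := by exact_mod_cast hN
  have hl0 : 0 ≤ log (N : ℝ) := Real.log_nonneg hN1
  have e := conv_identity N (fun _ => 1)
  simp only [mul_one] at e
  rw [e]
  have hcard : ∀ k : ℕ, ((Zs k).card : ℝ) ≤ 20 * k := by
    intro k
    rcases Nat.eq_zero_or_pos k with rfl | hk
    · have : Zs 0 = ∅ := by ext z; rw [mem_Zs]; simp; omega
      rw [this]; simp
    · have h1 := gauss_circle k hk
      have hk1 : (1 : ℝ) ≤ k := by exact_mod_cast hk
      have hs : √(k : ℝ) ≤ k := by rw [Real.sqrt_le_left (by linarith)]; nlinarith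
      have hp4 := Real.pi_lt_four
      rw [abs_le] at h1
      nlinarith
  have h1 : ∑ u ∈ Ps N, ∑ g ∈ Zs (N / nm u), (1 : ℝ) ≤ 20 * N * P N := by
    rw [P, Finset.mul_sum]
    apply Finset.sum_le_sum
    intro u _
    rw [Finset.sum_const, nsmul_eq_mul, mul_one]
    refine (hcard _).trans ?_
    have : ((N / nm u : ℕ) : ℝ) ≤ N / nm u := Nat.cast_div_le
    calc 20 * ((N / nm u : ℕ) : ℝ) ≤ 20 * (N / nm u) := by gcongr
      _ = _ := by ring
  refine h1.trans ?_
  have h3 := hP N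
  rw [abs_le] at h3
  have h4 : 4 / π ≤ 2 := by rw [div_le_iff₀ Real.pi_pos]; linarith [Real.pi_gt_three]
  have h5 : 4 / π * log N ≤ 2 * log (N : ℝ) := by gcongr
  rw [Real.log_mul two_ne_zero (by linarith)]
  have hl2 := Real.log_two_gt_d9
  have h6 : P N ≤ (2 + 2 * C1) * (log 2 + log N) := by nlinarith [mul_nonneg hC1 hl0]
  calc 20 * (N : ℝ) * P N ≤ 20 * N * ((2 + 2 * C1) * (log 2 + log N)) := by gcongr
    _ = _ := by ring

lemma tail_bound : ∃ C : ℝ, 0 < C ∧ ∀ K L : ℕ, 1 ≤ K → K ≤ L →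
    ∑ n ∈ Finset.Ioc K L, (r2 n : ℝ) ^ 2 / (n : ℝ) ^ 2 ≤ C * (log (2 * K) / K) := by
  obtain ⟨C, hC, hS⟩ := S_bound
  refine ⟨10 * C, by positivity, fun K L hK hKL => ?_⟩
  have key : ∑ n ∈ Finset.Ioc K L, (r2 n : ℝ) ^ 2 / (n : ℝ) ^ 2 ≤
      (∑ n ∈ Finset.Ioc 0 L, (r2 n : ℝ) ^ 2) / (L : ℝ) ^ 2 +
        2 * C * ((log (2 * K) + 2) / K - (log (2 * L) + 2) / L) := by
    induction L, hKL using Nat.le_induction with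
    | base => simp; positivity
    | succ L hL ih =>
      rw [Finset.sum_Ioc_succ_top hL, Finset.sum_Ioc_succ_top (Nat.zero_le _)]
      have hL1 : (1 : ℝ) ≤ L := by exact_mod_cast hK.trans hL
      have hL0 : (0 : ℝ) < L := by linarith
      have hSL := hS L (hK.trans hL)
      set s := ∑ n ∈ Finset.Ioc 0 L, (r2 n : ℝ) ^ 2
      have hs0 : 0 ≤ s := Finset.sum_nonneg (fun n _ => by positivity)
      push_cast
      have e0 : (2 : ℝ) * (L + 1) = 2 * L + 2 := by ring
      have hlog : log (2 * ((L : ℝ) + 1)) - log (2 * L) ≤ 1 / L := by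
        rw [Real.log_mul two_ne_zero (by positivity), Real.log_mul two_ne_zero (by positivity)]
        have := (log_step L (hK.trans hL)).2
        linarith
      set l := log (2 * (L : ℝ))
      set l' := log (2 * ((L : ℝ) + 1))
      have hl0 : 0 ≤ l := Real.log_nonneg (by linarith)
      have h1 : s / (L : ℝ) ^ 2 - s / ((L : ℝ) + 1) ^ 2 ≤ 2 * C * (l / (L * (L + 1))) := by
        have a1 : s / (L : ℝ) ^ 2 - s / ((L : ℝ) + 1) ^ 2 = s * ((2 * L + 1) / (L ^ 2 * (L + 1) ^ 2)) := by
          field_simp; ring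
        rw [a1]
        calc s * ((2 * (L : ℝ) + 1) / (L ^ 2 * (L + 1) ^ 2)) ≤ (C * (L * l)) * ((2 * (L + 1)) / (L ^ 2 * (L + 1) ^ 2)) := by
              gcongr
              linarith
          _ = _ := by field_simp
      have h2 : l / (L * (L + 1)) ≤ (l + 2) / L - (l' + 2) / (L + 1) := by
        have a2 : (l + 2) / L - (l' + 2) / (L + 1) = (l + 2 - L * (l' - l)) / (L * (L + 1)) := by
          field_simp; ring
        rw [a2]
        have a3 : L * (l' - l) ≤ 1 := by
          calc (L : ℝ) * (l' - l) ≤ L * (1 / L) := by gcongr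
            _ = 1 := by field_simp
        gcongr
        linarith
      have h3 : 2 * C * (l / (L * (L + 1))) ≤ 2 * C * ((l + 2) / L - (l' + 2) / (L + 1)) := by gcongr
      rw [add_div]
      linarith
  refine key.trans ?_
  have hL := hK.trans hKL
  have hL1 : (1 : ℝ) ≤ L := by exact_mod_cast hL
  have hK1 : (1 : ℝ) ≤ K := by exact_mod_cast hK
  have hL0 : (0 : ℝ) < L := by linarith
  have hSL := hS L hL
  have hl0 : 0 ≤ log (2 * (L : ℝ)) := Real.log_nonneg (by linarith)
  have h1 : (∑ n ∈ Finset.Ioc 0 L, (r2 n : ℝ) ^ 2) / (L : ℝ) ^ 2 ≤ 2 * C * ((log (2 * L) + 2) / L) := by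
    calc _ ≤ C * (L * log (2 * L)) / (L : ℝ) ^ 2 := by gcongr
      _ = C * (log (2 * L) / L) := by field_simp
      _ ≤ (2 * C) * ((log (2 * L) + 2) / L) := by
        gcongr
        · linarith
        · linarith
  have hl2 := Real.log_two_gt_d9
  have h2 : log 2 ≤ log (2 * (K : ℝ)) := Real.log_le_log (by norm_num) (by linarith)
  have h3 : 2 * C * ((log (2 * K) + 2) / K) ≤ 10 * C * (log (2 * K) / K) := by
    calc 2 * C * ((log (2 * (K : ℝ)) + 2) / K) ≤ 2 * C * ((5 * log (2 * K)) / K) := by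
          gcongr
          linarith
      _ = _ := by ring
  linarith

lemma sin_sq_approx (x : ℝ) (hx : 0 ≤ x) : |sin x ^ 2 - x ^ 2| ≤ x ^ 4 := by
  rw [abs_sub_comm, abs_of_nonneg (by linarith [Real.sin_sq_le_sq (x := x)])]
  rcases hx.eq_or_lt with rfl | hx
  · simp
  · have h1 := Real.sin_gt_sub_cube hx
    have h2 := Real.sin_lt hx
    have h3 : x - sin x ≤ x ^ 3 / 6 := by linarith
    have h4 : x + sin x ≤ 2 * x := by linarith
    have h5 : (x - sin x) * (x + sin x) ≤ x ^ 3 / 6 * (2 * x) := by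
      have := neg_le_abs (sin x)
      have hab := Real.abs_sin_lt_abs hx.ne'
      rw [abs_of_pos hx] at hab
      apply mul_le_mul h3 h4 (by linarith) (by positivity)
    nlinarith [pow_pos hx 4]

end DiagEval

theorem diagonal_evaluation :
    ∃ C > (0 : ℝ), ∃ w₀ : ℝ, 0 < w₀ ∧ w₀ < 1 ∧
      ∀ w : ℝ, 0 < w → w < w₀ → ∀ Y : ℝ, 1 ≤ Y →
        |(∑ n ∈ Finset.Icc 1 ⌊Y⌋₊,
              (r2 n : ℝ) ^ 2 / (n : ℝ) ^ 2 * Real.sin (Real.pi * Real.sqrt n * w) ^ 2)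
            - 8 * Real.pi ^ 2 * w ^ 2 * Real.log w ^ 2|
          ≤ C * (w ^ 2 * |Real.log w| + Y⁻¹ * Real.log (2 * Y)) := by
  obtain ⟨Ct, hCt, hT⟩ := DiagEval.T_asymp
  obtain ⟨Cs, hCs, hS⟩ := DiagEval.S_bound
  obtain ⟨Cr, hCr, hR⟩ := DiagEval.tail_bound
  have hp0 := Real.pi_pos
  refine ⟨π ^ 2 * (3 * Ct + 8) + 3 * π ^ 4 * Cs + 6 * Cr, by positivity, 1 / 4, by norm_num, by norm_num, ?_⟩
  intro w hw hw4 Y hY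
  -- the logarithm of w
  have hlw : log w ≤ -1 := by
    have h1 : log w ≤ log (1 / 4) := Real.log_le_log hw hw4.le
    have h2 : log (1 / 4) = - (2 * log 2) := by
      rw [one_div, Real.log_inv, show (4 : ℝ) = 2 ^ 2 by norm_num, Real.log_pow]; push_cast; ring
    have := Real.log_two_gt_d9
    linarith
  obtain ⟨l, hl⟩ : ∃ l, l = - log w := ⟨_, rfl⟩
  have habs : |log w| = l := by rw [abs_of_nonpos (by linarith), hl]
  have hl1 : 1 ≤ l := by linarith
  have hlsq : log w ^ 2 = l ^ 2 := by rw [hl]; ring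
  rw [habs, hlsq]
  -- the cutoff M
  obtain ⟨M, hM⟩ : ∃ M : ℕ, M = ⌊1 / w ^ 2⌋₊ := ⟨_, rfl⟩
  have hw2 : 0 < w ^ 2 := by positivity
  have hbig : 1 ≤ 1 / w ^ 2 := by
    rw [le_div_iff₀ hw2]; nlinarith
  have hM1 : 1 ≤ M := by rw [hM]; exact (Nat.one_le_floor_iff _).2 hbig
  have hM1' : (1 : ℝ) ≤ M := by exact_mod_cast hM1
  have hMle : (M : ℝ) ≤ 1 / w ^ 2 := by rw [hM]; exact Nat.floor_le (by positivity)
  have hMlt : 1 / w ^ 2 < M + 1 := by rw [hM]; exact Nat.lt_floor_add_one _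
  have hMw : M * w ^ 2 ≤ 1 := by rwa [le_div_iff₀ hw2] at hMle
  have hMw2 : 1 ≤ 2 * M * w ^ 2 := by
    rw [div_lt_iff₀ hw2] at hMlt
    nlinarith
  have hlogw : log (1 / w ^ 2) = 2 * l := by
    rw [one_div, Real.log_inv, Real.log_pow, hl]; push_cast; ring
  have hlM1 : log (M : ℝ) ≤ 2 * l := by
    rw [← hlogw]; exact Real.log_le_log (by linarith) hMle
  have hl2 := Real.log_two_lt_d9
  have hl2' := Real.log_two_gt_d9
  have hlM2 : 2 * l - 1 ≤ log (M : ℝ) := by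
    have : log (1 / w ^ 2) ≤ log (2 * M) := Real.log_le_log (by positivity) (by linarith)
    rw [hlogw, Real.log_mul two_ne_zero (by linarith)] at this
    linarith
  have hl2M : log (2 * (M : ℝ)) ≤ 3 * l := by
    rw [Real.log_mul two_ne_zero (by linarith)]
    linarith
  have hl2M0 : 0 ≤ log (2 * (M : ℝ)) := Real.log_nonneg (by linarith)
  -- the partial sums
  obtain ⟨D, hD⟩ : ∃ D : ℕ → ℝ, ∀ k, D k = ∑ n ∈ Finset.Ioc 0 k, (r2 n : ℝ) ^ 2 / (n : ℝ) ^ 2 * Real.sin (Real.pi * Real.sqrt n * w) ^ 2 :=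
    ⟨_, fun _ => rfl⟩
  have hIcc : Finset.Icc 1 ⌊Y⌋₊ = Finset.Ioc 0 ⌊Y⌋₊ := by
    ext n; simp only [Finset.mem_Icc, Finset.mem_Ioc]; omega
  rw [hIcc, ← hD]
  have hDdiff : ∀ K L : ℕ, 1 ≤ K → K ≤ L → |D L - D K| ≤ Cr * (log (2 * K) / K) := by
    intro K L hK hKL
    rw [hD, hD, ← Finset.sum_Ioc_consecutive _ (Nat.zero_le K) hKL, add_sub_cancel_left]
    rw [abs_of_nonneg (Finset.sum_nonneg (fun n _ => by positivity))]
    refine le_trans (Finset.sum_le_sum ?_) (hR K L hK hKL)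
    intro n _
    exact mul_le_of_le_one_right (by positivity) (Real.sin_sq_le_one _)
  -- main term
  have hmain : |π ^ 2 * w ^ 2 * ∑ n ∈ Finset.Ioc 0 M, (r2 n : ℝ) ^ 2 * (1 / (n : ℝ)) - 8 * π ^ 2 * w ^ 2 * l ^ 2|
      ≤ π ^ 2 * (3 * Ct + 8) * (w ^ 2 * l) := by
    have h1 := hT M hM1
    set T := ∑ n ∈ Finset.Ioc 0 M, (r2 n : ℝ) ^ 2 * (1 / (n : ℝ))
    have e : π ^ 2 * w ^ 2 * T - 8 * π ^ 2 * w ^ 2 * l ^ 2 =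
      π ^ 2 * w ^ 2 * ((T - 2 * log (M : ℝ) ^ 2) + 2 * ((log M - 2 * l) * (log M + 2 * l))) := by ring
    rw [e, abs_mul, abs_of_pos (a := π ^ 2 * w ^ 2) (by positivity)]
    have h2 : |(T - 2 * log (M : ℝ) ^ 2) + 2 * ((log M - 2 * l) * (log M + 2 * l))| ≤ (3 * Ct + 8) * l := by
      refine (abs_add_le _ _).trans ?_
      have h3 : |2 * ((log (M : ℝ) - 2 * l) * (log M + 2 * l))| ≤ 8 * l := by
        rw [abs_mul, abs_mul, abs_two]
        have a1 : |log (M : ℝ) - 2 * l| ≤ 1 := abs_le.2 ⟨by linarith, by linarith⟩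
        have a2 : |log (M : ℝ) + 2 * l| ≤ 4 * l := abs_le.2 ⟨by linarith, by linarith⟩
        nlinarith [mul_le_mul a1 a2 (abs_nonneg _) zero_le_one]
      have h4 : Ct * (log M + 1) ≤ Ct * (3 * l) := mul_le_mul_of_nonneg_left (by linarith) hCt
      linarith
    calc _ ≤ π ^ 2 * w ^ 2 * ((3 * Ct + 8) * l) := by gcongr
      _ = _ := by ring
  -- replacing sin² by its argument squared
  have hsin : |D M - π ^ 2 * w ^ 2 * ∑ n ∈ Finset.Ioc 0 M, (r2 n : ℝ) ^ 2 * (1 / (n : ℝ))| ≤ 3 * π ^ 4 * Cs * (w ^ 2 * l) := by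
    rw [hD, Finset.mul_sum, ← Finset.sum_sub_distrib]
    have hb : ∀ n ∈ Finset.Ioc 0 M, |(r2 n : ℝ) ^ 2 / (n : ℝ) ^ 2 * Real.sin (Real.pi * Real.sqrt n * w) ^ 2 - π ^ 2 * w ^ 2 * ((r2 n : ℝ) ^ 2 * (1 / (n : ℝ)))|
        ≤ π ^ 4 * w ^ 4 * (r2 n : ℝ) ^ 2 := by
      intro n hn
      rw [Finset.mem_Ioc] at hn
      have hn0 : (0 : ℝ) < n := by exact_mod_cast hn.1
      have hsq : (√(n : ℝ)) ^ 2 = n := Real.sq_sqrt hn0.le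
      have h1 := DiagEval.sin_sq_approx (π * √n * w) (by positivity)
      have e1 : (π * √(n : ℝ) * w) ^ 2 = π ^ 2 * n * w ^ 2 := by
        rw [mul_pow, mul_pow, hsq]
      have e2 : (π * √(n : ℝ) * w) ^ 4 = π ^ 4 * n ^ 2 * w ^ 4 := by
        rw [show (π * √(n : ℝ) * w) ^ 4 = ((π * √(n : ℝ) * w) ^ 2) ^ 2 by ring, e1]; ring
      rw [e1, e2] at h1
      have e3 : (r2 n : ℝ) ^ 2 / (n : ℝ) ^ 2 * Real.sin (Real.pi * Real.sqrt n * w) ^ 2 - π ^ 2 * w ^ 2 * ((r2 n : ℝ) ^ 2 * (1 / (n : ℝ))) =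
        (r2 n : ℝ) ^ 2 / (n : ℝ) ^ 2 * (Real.sin (Real.pi * Real.sqrt n * w) ^ 2 - π ^ 2 * n * w ^ 2) := by
        field_simp
      rw [e3, abs_mul, abs_of_nonneg (a := (r2 n : ℝ) ^ 2 / (n : ℝ) ^ 2) (by positivity)]
      calc _ ≤ (r2 n : ℝ) ^ 2 / (n : ℝ) ^ 2 * (π ^ 4 * n ^ 2 * w ^ 4) := by gcongr
        _ = _ := by field_simp
    refine (Finset.abs_sum_le_sum_abs _ _).trans ((Finset.sum_le_sum hb).trans ?_)
    rw [← Finset.mul_sum]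
    calc π ^ 4 * w ^ 4 * ∑ n ∈ Finset.Ioc 0 M, (r2 n : ℝ) ^ 2 ≤ π ^ 4 * w ^ 4 * (Cs * (M * log (2 * M))) := by
          gcongr; exact hS M hM1
      _ = π ^ 4 * Cs * w ^ 2 * ((M * w ^ 2) * log (2 * M)) := by ring
      _ ≤ π ^ 4 * Cs * w ^ 2 * (1 * (3 * l)) := by gcongr
      _ = _ := by ring
  -- comparing the cutoffs
  have hY2 : 0 ≤ Y⁻¹ * log (2 * Y) := mul_nonneg (by positivity) (Real.log_nonneg (by linarith))
  have hwl : 0 ≤ w ^ 2 * l := by positivity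
  have hcut : |D ⌊Y⌋₊ - D M| ≤ 6 * Cr * (w ^ 2 * l + Y⁻¹ * log (2 * Y)) := by
    have hK1 : 1 ≤ ⌊Y⌋₊ := (Nat.one_le_floor_iff _).2 hY
    rcases le_total M ⌊Y⌋₊ with h | h
    · have h1 := hDdiff M _ hM1 h
      have h2 : log (2 * (M : ℝ)) / M ≤ 6 * (w ^ 2 * l) := by
        rw [div_le_iff₀ (by linarith)]
        calc log (2 * (M : ℝ)) ≤ 3 * l := hl2M
          _ ≤ 3 * l * (2 * M * w ^ 2) := le_mul_of_one_le_right (by linarith) hMw2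
          _ = _ := by ring
      have h3 : Cr * (log (2 * M) / M) ≤ Cr * (6 * (w ^ 2 * l)) := by gcongr
      have h4 : 0 ≤ Cr * (Y⁻¹ * log (2 * Y)) := by positivity
      linarith
    · have h1 := hDdiff _ M hK1 h
      rw [abs_sub_comm] at h1
      have hf1 : (1 : ℝ) ≤ (⌊Y⌋₊ : ℝ) := by exact_mod_cast hK1
      have hf2 : (⌊Y⌋₊ : ℝ) ≤ Y := Nat.floor_le (by linarith)
      have hf3 : Y < ⌊Y⌋₊ + 1 := Nat.lt_floor_add_one _
      have hlY : log (2 * (⌊Y⌋₊ : ℝ)) ≤ log (2 * Y) := Real.log_le_log (by linarith) (by linarith)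
      have hlY0 : 0 ≤ log (2 * Y) := Real.log_nonneg (by linarith)
      have h2 : log (2 * (⌊Y⌋₊ : ℝ)) / ⌊Y⌋₊ ≤ 2 * (Y⁻¹ * log (2 * Y)) := by
        calc log (2 * (⌊Y⌋₊ : ℝ)) / ⌊Y⌋₊ ≤ log (2 * Y) / (Y / 2) := by
              gcongr
              linarith
          _ = _ := by field_simp
      have h3 : Cr * (log (2 * (⌊Y⌋₊ : ℝ)) / ⌊Y⌋₊) ≤ Cr * (2 * (Y⁻¹ * log (2 * Y))) := by gcongr
      have h4 : 0 ≤ Cr * (Y⁻¹ * log (2 * Y)) := by positivity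
      have h5 : 0 ≤ Cr * (w ^ 2 * l) := by positivity
      linarith
  set T := ∑ n ∈ Finset.Ioc 0 M, (r2 n : ℝ) ^ 2 * (1 / (n : ℝ))
  have e : D ⌊Y⌋₊ - 8 * π ^ 2 * w ^ 2 * l ^ 2 =
    (D ⌊Y⌋₊ - D M) + ((D M - π ^ 2 * w ^ 2 * T) + (π ^ 2 * w ^ 2 * T - 8 * π ^ 2 * w ^ 2 * l ^ 2)) := by ring
  rw [e]
  refine (abs_add_le _ _).trans ?_
  have h1 := abs_add_le (D M - π ^ 2 * w ^ 2 * T) (π ^ 2 * w ^ 2 * T - 8 * π ^ 2 * w ^ 2 * l ^ 2)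
  have h2 : 0 ≤ (π ^ 2 * (3 * Ct + 8) + 3 * π ^ 4 * Cs) * (Y⁻¹ * log (2 * Y)) := by positivity
  linarith
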